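/- Let V be a K-vector space, L_0 an A_0-submodule of V, L_∞ an A_∞-submodule of V, and V_A an A-submodule of V, each of which generates V as a K-vector space. Set E = L_0 ∩ L_∞ ∩ V_A. Then the following conditions are equivalent: (1) the natural map E → L_0/qL_0 is an isomorphism; (2) the natural map E → L_∞/q^{−1}L_∞ is an isomorphism; (3) the natural map (L_0 ∩ V_A) ⊕ (q^{−1}L_∞ ∩ V_A) → V_A is an isomorphism; (4) the natural maps A_0⊗_ℚ E → L_0, A_∞⊗_ℚ E → L_∞, A⊗_ℚ E → V_A and K⊗_ℚ E → V are all isomorphisms. -/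

import Mathlib

noncomputable section
open scoped BigOperators TensorProduct

abbrev KK : Type := RatFunc ℚ

def qq : KK := RatFunc.X

/-- the subring `A₀ = {f/g : f,g ∈ ℚ[q], g(0) ≠ 0}` of `K = ℚ(q)`, as a subset. -/
def A0set : Set KK :=
  {x | ∃ f g : Polynomial ℚ, Polynomial.eval 0 g ≠ 0 ∧
    x = algebraMap (Polynomial ℚ) KK f / algebraMap (Polynomial ℚ) KK g}

/-- the subring `A_∞ = {f/g : f,g ∈ ℚ[q⁻¹], g(0) ≠ 0}` of `K = ℚ(q)`, as a subset. -/
def AinfSet : Set KK :=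
  {x | ∃ f g : Polynomial ℚ, Polynomial.eval 0 g ≠ 0 ∧
    x = Polynomial.aeval qq⁻¹ f / Polynomial.aeval qq⁻¹ g}

/-- the subring `A = ℚ[q, q⁻¹]` of `K = ℚ(q)`, as a subset. -/
def Aset : Set KK :=
  {x | ∃ (f : Polynomial ℚ) (n : ℕ), x = algebraMap (Polynomial ℚ) KK f * qq ^ (-(n : ℤ))}

variable {V : Type} [AddCommGroup V] [Module KK V] [Module ℚ V]
  [IsScalarTower ℚ KK V] [SMulCommClass ℚ KK V]

/-- a `ℚ`-submodule stable under multiplication by a set `S ⊆ K` of scalars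
(this is how we encode "`A₀`-submodule", etc.). -/
def IsSubmoduleOver (S : Set KK) (L : Submodule ℚ V) : Prop :=
  ∀ c ∈ S, ∀ x ∈ L, c • x ∈ L

/-- `c L = {c x : x ∈ L}` for a scalar `c : K`. -/
def scalMul (c : KK) (L : Submodule ℚ V) : Submodule ℚ V :=
  Submodule.span ℚ {x | ∃ y ∈ L, x = c • y}

/-- the natural map `E → L/N` for `E ≤ L`. -/
def balMap (L : Submodule ℚ V) (E : Submodule ℚ V) (hE : E ≤ L) (N : Submodule ℚ L) :
    E → L ⧸ N :=
  fun x => Submodule.Quotient.mk (⟨x.1, hE x.2⟩ : L)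

/-- the natural map `W ⊗_ℚ E → V`, `c ⊗ x ↦ c • x`, for `W` a `ℚ`-submodule of `K`. -/
def smulPair (W : Submodule ℚ KK) (E : Submodule ℚ V) : W ⊗[ℚ] E →ₗ[ℚ] V :=
  TensorProduct.lift
    { toFun := fun c =>
        { toFun := fun x => (c : KK) • (x : V)
          map_add' := by intro x y; simp [smul_add]
          map_smul' := by
            intro r x
            show (c : KK) • ((r • x : E) : V) = r • ((c : KK) • (x : V))
            rw [Submodule.coe_smul]
            exact smul_comm _ _ _ }
      map_add' := by intro c c'; ext x; simp [add_smul]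
      map_smul' := by intro r c; ext x; simp [smul_assoc] }

/-- the natural map `K ⊗_ℚ E → V`. -/
def smulAll (E : Submodule ℚ V) : KK ⊗[ℚ] E →ₗ[ℚ] V :=
  TensorProduct.lift
    { toFun := fun c =>
        { toFun := fun x => c • (x : V)
          map_add' := by intro x y; simp [smul_add]
          map_smul' := by
            intro r x
            show c • ((r • x : E) : V) = r • (c • (x : V))
            rw [Submodule.coe_smul]
            exact smul_comm _ _ _ }
      map_add' := by intro c c'; ext x; simp [add_smul]
      map_smul' := by intro r c; ext x; simp [smul_assoc] }

/-- localisation at `0` of `ℚ[p]`, as a subset of `K`. -/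
def Ap (p : KK) : Set KK :=
  {x | ∃ f g : Polynomial ℚ, Polynomial.eval 0 g ≠ 0 ∧
    x = Polynomial.aeval p f / Polynomial.aeval p g}

/-- `p` is a generator of `K` over `ℚ` (and transcendental). -/
def Good (p : KK) : Prop :=
  p ≠ 0 ∧ (∀ g : Polynomial ℚ, Polynomial.aeval p g = 0 → g = 0) ∧
  ∀ c : KK, ∃ f g : Polynomial ℚ, g ≠ 0 ∧
    c = Polynomial.aeval p f / Polynomial.aeval p g

lemma aeval_qq (f : Polynomial ℚ) : Polynomial.aeval qq f = algebraMap (Polynomial ℚ) KK f := by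
  have h : (Polynomial.aeval qq : Polynomial ℚ →ₐ[ℚ] KK)
      = IsScalarTower.toAlgHom ℚ (Polynomial ℚ) KK := by
    apply Polynomial.algHom_ext
    simp [qq]
  rw [h]; rfl

lemma A0set_eq : A0set = Ap qq := by
  ext x; simp only [A0set, Ap, Set.mem_ofPred_eq, aeval_qq]

lemma AinfSet_eq : AinfSet = Ap qq⁻¹ := rfl

lemma qq_ne : qq ≠ 0 := RatFunc.X_ne_zero

lemma good_qq : Good qq := by
  refine ⟨qq_ne, ?_, ?_⟩
  · intro g hg
    rw [aeval_qq] at hg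
    exact (map_eq_zero_iff _ (IsFractionRing.injective (Polynomial ℚ) KK)).1 hg
  · intro c
    refine ⟨c.num, c.denom, c.denom_ne_zero, ?_⟩
    rw [aeval_qq, aeval_qq, RatFunc.num_div_denom]

lemma aeval_rev (f : Polynomial ℚ) :
    Polynomial.aeval qq⁻¹ f.reverse * qq ^ f.natDegree = Polynomial.aeval qq f := by
  letI := invertibleOfNonzero qq_ne
  have h := Polynomial.eval₂_reverse_mul_pow (algebraMap ℚ KK) qq f
  rw [invOf_eq_inv] at h
  exact h

lemma aeval_rev0 (f : Polynomial ℚ) (h : Polynomial.aeval qq⁻¹ f = 0) : f = 0 := by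
  letI := invertibleOfNonzero (inv_ne_zero qq_ne)
  have h1 := Polynomial.eval₂_reverse_mul_pow (algebraMap ℚ KK) qq⁻¹ f
  rw [invOf_eq_inv, inv_inv] at h1
  change Polynomial.aeval qq f.reverse * _ = Polynomial.aeval qq⁻¹ f at h1
  rw [h] at h1
  have h2 : Polynomial.aeval qq f.reverse = 0 := by
    rcases mul_eq_zero.1 h1 with h | h
    · exact h
    · exact absurd h (pow_ne_zero _ (inv_ne_zero qq_ne))
  simpa using good_qq.2.1 _ h2

lemma good_inv : Good qq⁻¹ := by
  refine ⟨inv_ne_zero qq_ne, aeval_rev0, ?_⟩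
  intro c
  obtain ⟨f, g, hg, rfl⟩ := good_qq.2.2 c
  refine ⟨f.reverse * Polynomial.X ^ g.natDegree, g.reverse * Polynomial.X ^ f.natDegree, ?_, ?_⟩
  · simp [hg]
  · rw [← aeval_rev f, ← aeval_rev g]
    have h0 : Polynomial.aeval qq⁻¹ g.reverse ≠ 0 := fun h => hg (by simpa using aeval_rev0 _ h)
    have := qq_ne
    simp only [map_mul, map_pow, Polynomial.aeval_X]
    generalize Polynomial.aeval qq⁻¹ g.reverse = a at *
    generalize Polynomial.aeval qq⁻¹ f.reverse = b at *
    rw [inv_pow, inv_pow]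
    field_simp

lemma aeval_ne {p : KK} (hp : Good p) {g : Polynomial ℚ} (h : Polynomial.eval 0 g ≠ 0) :
    Polynomial.aeval p g ≠ 0 := by
  intro h0
  rw [hp.2.1 g h0] at h
  simp at h

lemma Ap_aeval (p : KK) (f : Polynomial ℚ) : Polynomial.aeval p f ∈ Ap p :=
  ⟨f, 1, by simp, by simp⟩

lemma Ap_p (p : KK) : p ∈ Ap p := by simpa using Ap_aeval p Polynomial.X

lemma Ap_one (p : KK) : (1 : KK) ∈ Ap p := by simpa using Ap_aeval p 1

lemma Ap_inv {p : KK} {g : Polynomial ℚ} (h : Polynomial.eval 0 g ≠ 0) :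
    (Polynomial.aeval p g)⁻¹ ∈ Ap p := ⟨1, g, h, by simp⟩

lemma Ap_mul {p a b : KK} (ha : a ∈ Ap p) (hb : b ∈ Ap p) : a * b ∈ Ap p := by
  obtain ⟨f, g, hg, rfl⟩ := ha
  obtain ⟨f', g', hg', rfl⟩ := hb
  exact ⟨f * f', g * g', by simp [hg, hg'], by simp [div_mul_div_comm]⟩

lemma Ap_add {p a b : KK} (hp : Good p) (ha : a ∈ Ap p) (hb : b ∈ Ap p) : a + b ∈ Ap p := by
  obtain ⟨f, g, hg, rfl⟩ := ha
  obtain ⟨f', g', hg', rfl⟩ := hb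
  have h1 := aeval_ne hp hg
  have h2 := aeval_ne hp hg'
  refine ⟨f * g' + g * f', g * g', by simp [hg, hg'], ?_⟩
  rw [div_add_div _ _ h1 h2]; simp

lemma Ap_decomp {p c : KK} (hp : Good p) (hc : c ∈ Ap p) :
    ∃ r : ℚ, ∃ d ∈ Ap p, c = algebraMap ℚ KK r + p * d := by
  obtain ⟨f, g, hg, rfl⟩ := hc
  set r : ℚ := f.eval 0 / g.eval 0 with hr
  have h0 : Polynomial.X ∣ f - Polynomial.C r * g := by
    rw [Polynomial.X_dvd_iff, Polynomial.coeff_zero_eq_eval_zero]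
    simp [hr, hg]
  obtain ⟨k, hk⟩ := h0
  refine ⟨r, _, ⟨k, g, hg, rfl⟩, ?_⟩
  have h1 := aeval_ne hp hg
  have h2 := congrArg (Polynomial.aeval p) hk
  simp only [map_sub, map_mul, Polynomial.aeval_X, Polynomial.aeval_C] at h2
  field_simp
  linear_combination h2

lemma poly_decomp {g : Polynomial ℚ} (hg : g ≠ 0) :
    ∃ (m : ℕ) (h : Polynomial ℚ), Polynomial.eval 0 h ≠ 0 ∧ g = Polynomial.X ^ m * h := by
  obtain ⟨h, h1, h2⟩ := Polynomial.exists_eq_pow_rootMultiplicity_mul_and_not_dvd g hg 0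
  simp only [map_zero, sub_zero] at h1 h2
  refine ⟨_, h, ?_, h1⟩
  rwa [Polynomial.X_dvd_iff, Polynomial.coeff_zero_eq_eval_zero] at h2

lemma Ap_pow {p : KK} (hp : Good p) (c : KK) : ∃ m : ℕ, p ^ m * c ∈ Ap p := by
  obtain ⟨f, g, hg, rfl⟩ := hp.2.2 c
  obtain ⟨m, h, hh, rfl⟩ := poly_decomp hg
  refine ⟨m, f, h, hh, ?_⟩
  have h1 := aeval_ne hp hh
  have h2 := hp.1
  simp only [map_mul, map_pow, Polynomial.aeval_X]
  field_simp

lemma Ap_contra {p a : KK} (hp : Good p) (ha : a ∈ Ap p) : (1 : KK) ≠ p * a := by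
  obtain ⟨f, g, hg, rfl⟩ := ha
  intro h
  have h1 := aeval_ne hp hg
  field_simp at h
  have h2 : g - Polynomial.X * f = 0 := hp.2.1 _ (by simp [h])
  rw [sub_eq_zero] at h2
  rw [h2] at hg
  simp at hg

lemma aeval_stable {W : Type} [AddCommGroup W] [Module KK W] [Module ℚ W]
    (p : KK) (S : Submodule ℚ W) (h : ∀ x ∈ S, p • x ∈ S) (f : Polynomial ℚ) :
    ∀ x ∈ S, Polynomial.aeval p f • x ∈ S := by
  induction f using Polynomial.induction_on' with
  | add f g hf hg =>
    intro x hx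
    rw [map_add, add_smul]
    exact S.add_mem (hf x hx) (hg x hx)
  | monomial n a =>
    intro x hx
    rw [Polynomial.aeval_monomial, mul_smul, algebraMap_smul]
    apply S.smul_mem
    induction n with
    | zero => simpa using hx
    | succ n ih => rw [pow_succ', mul_smul]; exact h _ ih

lemma mem_scalMul (c : KK) (L : Submodule ℚ V) (x : V) :
    x ∈ scalMul c L ↔ ∃ y ∈ L, x = c • y := by
  constructor
  · intro h
    induction h using Submodule.span_induction with
    | mem x hx => exact hx
    | zero => exact ⟨0, L.zero_mem, by simp⟩
    | add x y _ _ hx hy =>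
      obtain ⟨a, ha, rfl⟩ := hx
      obtain ⟨b, hb, rfl⟩ := hy
      exact ⟨a + b, L.add_mem ha hb, by simp⟩
    | smul r x _ hx =>
      obtain ⟨a, ha, rfl⟩ := hx
      exact ⟨r • a, L.smul_mem r ha, (smul_comm _ _ _)⟩
  · intro h
    exact Submodule.subset_span h

/-- elementary form of conditions (1) and (2) -/
def C1 (p : KK) (L E : Submodule ℚ V) : Prop :=
  (∀ y ∈ L, p • y ∈ E → y = 0) ∧ (∀ x ∈ L, ∃ e ∈ E, ∃ y ∈ L, x = e + p • y)

/-- elementary form of condition (3) -/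
def C3 (p : KK) (L L' VA : Submodule ℚ V) : Prop :=
  (∀ x ∈ VA, ∃ a ∈ L, ∃ b ∈ L', a ∈ VA ∧ b ∈ VA ∧ x = a + p⁻¹ • b) ∧
  (∀ y ∈ L', p⁻¹ • y ∈ L → y ∈ VA → y = 0)

lemma C1_iff (p : KK) (hp : p ≠ 0) (L E : Submodule ℚ V) (hE : E ≤ L) :
    Function.Bijective (balMap L E hE ((scalMul p L).comap L.subtype)) ↔ C1 p L E := by
  have key : ∀ x y : L, (Submodule.Quotient.mk x : L ⧸ (scalMul p L).comap L.subtype)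
      = Submodule.Quotient.mk y ↔ ∃ z ∈ L, (x : V) - y = p • z := by
    intro x y
    rw [Submodule.Quotient.eq, Submodule.mem_comap, mem_scalMul]
    rfl
  constructor
  · rintro ⟨hi, hs⟩
    constructor
    · intro y hy hyE
      have : (⟨p • y, hyE⟩ : E) = 0 := by
        apply hi
        refine (key _ _).2 ⟨y, hy, by simp⟩
      have h2 : p • y = 0 := congrArg Subtype.val this
      exact (smul_eq_zero.1 h2).resolve_left hp
    · intro x hx
      obtain ⟨e, he⟩ := hs (Submodule.Quotient.mk ⟨x, hx⟩)
      obtain ⟨z, hz, h⟩ := (key _ _).1 he.symm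
      exact ⟨e, e.2, z, hz, by rw [← h]; simp⟩
  · rintro ⟨h1, h2⟩
    constructor
    · intro x y hxy
      obtain ⟨z, hz, h⟩ := (key _ _).1 hxy
      have h' : (x : V) - y = p • z := h
      have : z = 0 := h1 z hz (by rw [← h']; exact E.sub_mem x.2 y.2)
      rw [this, smul_zero, sub_eq_zero] at h'
      exact Subtype.ext h'
    · intro t
      obtain ⟨x, rfl⟩ := Submodule.Quotient.mk_surjective _ t
      obtain ⟨e, he, y, hy, h⟩ := h2 x x.2
      refine ⟨⟨e, he⟩, (key _ _).2 ⟨-y, L.neg_mem hy, ?_⟩⟩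
      rw [h]; simp

lemma C3_iff (p : KK) (hp : p ≠ 0) (L L' VA : Submodule ℚ V)
    (hA : ∀ x ∈ VA, p • x ∈ VA) (hA' : ∀ x ∈ VA, p⁻¹ • x ∈ VA) :
    ((L ⊓ VA) ⊔ (scalMul p⁻¹ L' ⊓ VA) = VA ∧ (L ⊓ VA) ⊓ (scalMul p⁻¹ L' ⊓ VA) = ⊥)
      ↔ C3 p L L' VA := by
  constructor
  · rintro ⟨h1, h2⟩
    constructor
    · intro x hx
      rw [← h1] at hx
      obtain ⟨a, ha, b, hb, rfl⟩ := Submodule.mem_sup.1 hx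
      obtain ⟨y, hy, hby⟩ := (mem_scalMul _ _ _).1 hb.1
      refine ⟨a, ha.1, y, hy, ha.2, ?_, by rw [hby]⟩
      have := hA _ hb.2
      rwa [hby, smul_inv_smul₀ hp] at this
    · intro y hy hyL hyA
      have : p⁻¹ • y ∈ (L ⊓ VA) ⊓ (scalMul p⁻¹ L' ⊓ VA) :=
        ⟨⟨hyL, hA' _ hyA⟩, (mem_scalMul _ _ _).2 ⟨y, hy, rfl⟩, hA' _ hyA⟩
      rw [h2, Submodule.mem_bot] at this
      exact (smul_eq_zero.1 this).resolve_left (inv_ne_zero hp)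
  · rintro ⟨h1, h2⟩
    constructor
    · apply le_antisymm (sup_le inf_le_right inf_le_right)
      intro x hx
      obtain ⟨a, ha, b, hb, haA, hbA, rfl⟩ := h1 x hx
      exact Submodule.add_mem_sup ⟨ha, haA⟩ ⟨(mem_scalMul _ _ _).2 ⟨b, hb, rfl⟩, hA' _ hbA⟩
    · rw [eq_bot_iff]
      rintro x ⟨⟨hx1, hx2⟩, hx3, _⟩
      obtain ⟨y, hy, rfl⟩ := (mem_scalMul _ _ _).1 hx3
      have hyA := hA _ hx2
      rw [smul_inv_smul₀ hp] at hyA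
      simp [h2 y hy hx1 hyA]

lemma C3_symm (p : KK) (hp : p ≠ 0) (L L' VA : Submodule ℚ V)
    (hA : ∀ x ∈ VA, p • x ∈ VA) (hA' : ∀ x ∈ VA, p⁻¹ • x ∈ VA)
    (h : C3 p L L' VA) : C3 p⁻¹ L' L VA := by
  obtain ⟨h1, h2⟩ := h
  rw [C3, inv_inv]
  constructor
  · intro x hx
    obtain ⟨a, ha, b, hb, haA, hbA, hab⟩ := h1 _ (hA' x hx)
    refine ⟨b, hb, a, ha, hbA, haA, ?_⟩
    have := congrArg (p • ·) hab
    simp only [smul_inv_smul₀ hp, smul_add] at this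
    rw [this, add_comm]
  · intro y hy hyL hyA
    have := h2 (p • y) hyL (by rwa [inv_smul_smul₀ hp]) (hA _ hyA)
    exact (smul_eq_zero.1 this).resolve_left hp

lemma ppow_mem {p : KK} {L : Submodule ℚ V} (h : ∀ x ∈ L, p • x ∈ L) (n : ℕ) :
    ∀ x ∈ L, p ^ n • x ∈ L := by
  intro x hx
  induction n with
  | zero => simpa
  | succ n ih => rw [pow_succ', mul_smul]; exact h _ ih

lemma exists_pow {p : KK} (hp : Good p) {L : Submodule ℚ V} (hL : IsSubmoduleOver (Ap p) L)
    (hg : Submodule.span KK (L : Set V) = ⊤) (v : V) : ∃ n : ℕ, p ^ n • v ∈ L := by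
  have hpL : ∀ x ∈ L, p • x ∈ L := fun x hx => hL p (Ap_p p) x hx
  have hv : v ∈ Submodule.span KK (L : Set V) := hg ▸ Submodule.mem_top
  induction hv using Submodule.closure_induction with
  | zero => exact ⟨0, by simp⟩
  | add x y _ _ hx hy =>
    obtain ⟨n, hn⟩ := hx
    obtain ⟨m, hm⟩ := hy
    refine ⟨n + m, ?_⟩
    rw [smul_add]
    apply L.add_mem
    · rw [add_comm, pow_add, mul_smul]; exact ppow_mem hpL _ _ hn
    · rw [pow_add, mul_smul]; exact ppow_mem hpL _ _ hm
  | smul_mem c x hx =>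
    obtain ⟨m, hm⟩ := Ap_pow hp c
    exact ⟨m, by rw [← mul_smul]; exact hL _ hm x hx⟩

/-- Laurent span of `E`. -/
def TT (p : KK) (E : Submodule ℚ V) : Submodule ℚ V :=
  Submodule.span ℚ {x | ∃ k : ℤ, ∃ e ∈ E, x = p ^ k • e}

lemma TT_zpow {p : KK} (hp : p ≠ 0) (E : Submodule ℚ V) (n : ℤ) (x : V) (hx : x ∈ TT p E) :
    p ^ n • x ∈ TT p E := by
  induction hx using Submodule.span_induction with
  | mem x hx =>
    obtain ⟨k, e, he, rfl⟩ := hx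
    exact Submodule.subset_span ⟨n + k, e, he, by rw [zpow_add₀ hp, mul_smul]⟩
  | zero => simp
  | add x y _ _ hx hy => rw [smul_add]; exact Submodule.add_mem _ hx hy
  | smul r x _ hx => rw [smul_comm]; exact Submodule.smul_mem _ _ hx

lemma E_le_TT {p : KK} (E : Submodule ℚ V) {x : V} (hx : x ∈ E) : x ∈ TT p E :=
  Submodule.subset_span ⟨0, x, hx, by simp⟩

section main
variable {p : KK} (hp : Good p) (hp' : Good p⁻¹) {L L' VA E : Submodule ℚ V}
  (hE : ∀ x, x ∈ E ↔ x ∈ L ∧ x ∈ L' ∧ x ∈ VA)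
  (hL : IsSubmoduleOver (Ap p) L) (hL' : IsSubmoduleOver (Ap p⁻¹) L')
  (hA : ∀ x ∈ VA, p • x ∈ VA) (hA' : ∀ x ∈ VA, p⁻¹ • x ∈ VA)
  (hg : Submodule.span KK (L : Set V) = ⊤)
  (hg' : Submodule.span KK (L' : Set V) = ⊤)
  (hgA : Submodule.span KK (VA : Set V) = ⊤)

include hp hE hL' hA' in
lemma filt_le (h : C1 p L E) (n : ℕ) :
    ∀ x ∈ L, x ∈ VA → p⁻¹ ^ n • x ∈ L' → x ∈ TT p E := by
  have hp0 := hp.1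
  induction n with
  | zero =>
    intro x hx hxA hx'
    exact E_le_TT E ((hE x).2 ⟨hx, by simpa using hx', hxA⟩)
  | succ n ih =>
    intro x hx hxA hx'
    obtain ⟨e, he, y, hy, rfl⟩ := h.2 x hx
    have heE := (hE e).1 he
    have hyA : y ∈ VA := by
      have := hA' _ (VA.sub_mem hxA heE.2.2)
      rwa [add_sub_cancel_left, inv_smul_smul₀ hp0] at this
    have hL'p : ∀ x ∈ L', p⁻¹ • x ∈ L' := fun x hx => hL' _ (Ap_p _) x hx
    have hyL' : p⁻¹ ^ n • y ∈ L' := by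
      have := L'.sub_mem hx' (ppow_mem hL'p (n+1) e heE.2.1)
      rwa [smul_add, add_sub_cancel_left, pow_succ, mul_smul, inv_smul_smul₀ hp0] at this
    have := TT_zpow hp0 E 1 y (ih y hy hyA hyL')
    rw [zpow_one] at this
    exact Submodule.add_mem _ (E_le_TT E he) this

include hp hp' hE hL hL' hA hA' hg hg' in
lemma VA_le (h : C1 p L E) : VA ≤ TT p E := by
  intro x hx
  obtain ⟨n, hn⟩ := exists_pow hp hL hg x
  obtain ⟨m, hm⟩ := exists_pow hp' hL' hg' (p ^ n • x)
  have := filt_le hp hE hL' hA' h m _ hn (ppow_mem hA n x hx) hm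
  have := TT_zpow hp.1 E (-n) _ this
  rwa [zpow_neg, zpow_natCast, inv_smul_smul₀ (pow_ne_zero _ hp.1)] at this

include hp hp' hE hL hL' hA hA' hg hg' in
lemma C1_C3 (h : C1 p L E) : C3 p L L' VA := by
  have hp0 := hp.1
  have hLp : ∀ x ∈ L, p • x ∈ L := fun x hx => hL _ (Ap_p _) x hx
  have hL'p : ∀ x ∈ L', p⁻¹ • x ∈ L' := fun x hx => hL' _ (Ap_p _) x hx
  constructor
  · intro x hx
    have hT := VA_le hp hp' hE hL hL' hA hA' hg hg' h hx
    clear hx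
    induction hT using Submodule.span_induction with
    | mem x hx =>
      obtain ⟨k, e, he, rfl⟩ := hx
      have heE := (hE e).1 he
      rcases lt_or_ge k 0 with hk | hk
      · obtain ⟨n, rfl⟩ : ∃ n : ℕ, k = -(n + 1 : ℕ) := ⟨(-k - 1).toNat, by omega⟩
        refine ⟨0, L.zero_mem, p⁻¹ ^ n • e, ppow_mem hL'p n e heE.2.1, VA.zero_mem,
          ppow_mem hA' n e heE.2.2, ?_⟩
        rw [zero_add, ← mul_smul, ← pow_succ', zpow_neg, zpow_natCast, inv_pow]
      · obtain ⟨n, rfl⟩ : ∃ n : ℕ, k = n := ⟨k.toNat, by omega⟩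
        refine ⟨p ^ n • e, ppow_mem hLp n e heE.1, 0, L'.zero_mem, ppow_mem hA n e heE.2.2,
          VA.zero_mem, ?_⟩
        simp
    | zero => exact ⟨0, L.zero_mem, 0, L'.zero_mem, VA.zero_mem, VA.zero_mem, by simp⟩
    | add x y _ _ hx hy =>
      obtain ⟨a, h1, b, h2, h3, h4, rfl⟩ := hx
      obtain ⟨c, k1, d, k2, k3, k4, rfl⟩ := hy
      exact ⟨a + c, L.add_mem h1 k1, b + d, L'.add_mem h2 k2, VA.add_mem h3 k3,
        VA.add_mem h4 k4, by rw [smul_add]; abel⟩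
    | smul r x _ hx =>
      obtain ⟨a, h1, b, h2, h3, h4, rfl⟩ := hx
      exact ⟨r • a, L.smul_mem r h1, r • b, L'.smul_mem r h2, VA.smul_mem r h3,
        VA.smul_mem r h4, by rw [smul_add, smul_comm r]⟩
  · intro y hy hyL hyA
    have hyL2 := hLp _ hyL
    rw [smul_inv_smul₀ hp0] at hyL2
    have := h.1 (p⁻¹ • y) hyL (by rw [smul_inv_smul₀ hp0]; exact (hE y).2 ⟨hyL2, hy, hyA⟩)
    exact (smul_eq_zero.1 this).resolve_left (inv_ne_zero hp0)

include hp hA hgA in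
lemma exists_den (v : V) : ∃ h : Polynomial ℚ, h ≠ 0 ∧ Polynomial.aeval p h • v ∈ VA := by
  have hv : v ∈ Submodule.span KK (VA : Set V) := hgA ▸ Submodule.mem_top
  have hst := aeval_stable p VA hA
  induction hv using Submodule.closure_induction with
  | zero => exact ⟨1, by simp, by simp⟩
  | add x y _ _ hx hy =>
    obtain ⟨n, hn0, hn⟩ := hx
    obtain ⟨m, hm0, hm⟩ := hy
    refine ⟨n * m, mul_ne_zero hn0 hm0, ?_⟩
    rw [smul_add]
    apply VA.add_mem
    · rw [mul_comm, map_mul, mul_smul]; exact hst _ _ hn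
    · rw [map_mul, mul_smul]; exact hst _ _ hm
  | smul_mem c x hx =>
    obtain ⟨f, g, hg, rfl⟩ := hp.2.2 c
    have : Polynomial.aeval p g ≠ 0 := fun h => hg (hp.2.1 _ h)
    exact ⟨g, hg, by rw [← mul_smul, mul_div_cancel₀ _ this]; exact hst _ _ hx⟩

include hp hE hL hA hA' hgA in
lemma C3_C1 (h : C3 p L L' VA) : C1 p L E := by
  have hp0 := hp.1
  have hLp : ∀ x ∈ L, p • x ∈ L := fun x hx => hL _ (Ap_p _) x hx
  constructor
  · intro y hy hyE
    have hh := (hE _).1 hyE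
    have := h.2 (p • y) hh.2.1 (by rwa [inv_smul_smul₀ hp0]) hh.2.2
    exact (smul_eq_zero.1 this).resolve_left hp0
  · intro x hx
    obtain ⟨g, hg0, hgx⟩ := exists_den hp hA hgA x
    obtain ⟨m, k, hk, rfl⟩ := poly_decomp hg0
    have hkA : Polynomial.aeval p k • x ∈ VA := by
      have := ppow_mem hA' m _ hgx
      rwa [← mul_smul, map_mul, map_pow, Polynomial.aeval_X, inv_pow,
        inv_mul_cancel_left₀ (pow_ne_zero _ hp0)] at this
    -- normalise
    have hk1 : Polynomial.X ∣ Polynomial.C (k.eval 0)⁻¹ * k - 1 := by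
      rw [Polynomial.X_dvd_iff, Polynomial.coeff_zero_eq_eval_zero]
      simp [hk]
    obtain ⟨j, hj⟩ := hk1
    set v : V := (k.eval 0)⁻¹ • Polynomial.aeval p k • x with hv
    have hvA : v ∈ VA := VA.smul_mem _ hkA
    have hvL : v ∈ L := L.smul_mem _ (hL _ (Ap_aeval p k) x hx)
    have hvx : v = x + p • (Polynomial.aeval p j • x) := by
      have := congrArg (fun f => Polynomial.aeval p f • x) hj
      simp only [map_sub, map_mul, Polynomial.aeval_X, Polynomial.aeval_C, map_one, sub_smul,
        mul_smul, one_smul, algebraMap_smul] at this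
      rw [← this, hv]; abel
    obtain ⟨a, ha, b, hb, haA, hbA, hab⟩ := h.1 _ (hA' v hvA)
    have hvab : v = p • a + b := by
      have := congrArg (p • ·) hab
      simpa only [smul_add, smul_inv_smul₀ hp0] using this
    have hbL : b ∈ L := by
      have : b = v - p • a := by rw [hvab]; abel
      rw [this]; exact L.sub_mem hvL (hLp a ha)
    refine ⟨b, (hE b).2 ⟨hbL, hb, hbA⟩, a - Polynomial.aeval p j • x,
      L.sub_mem ha (hL _ (Ap_aeval p j) x hx), ?_⟩
    have : x = v - p • (Polynomial.aeval p j • x) := by rw [hvx]; abel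
    rw [smul_sub]
    nth_rewrite 1 [this]
    rw [hvab]; abel

end main

lemma smulPair_tmul (W : Submodule ℚ KK) (E : Submodule ℚ V) (c : W) (e : E) :
    smulPair W E (c ⊗ₜ e) = (c : KK) • (e : V) := rfl

lemma smulAll_tmul (E : Submodule ℚ V) (c : KK) (e : E) :
    smulAll E (c ⊗ₜ e) = c • (e : V) := rfl

lemma range_smulPair (S : Set KK) (E : Submodule ℚ V) :
    LinearMap.range (smulPair (Submodule.span ℚ S) E)
      = Submodule.span ℚ {x | ∃ c ∈ S, ∃ e ∈ E, x = c • e} := by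
  apply le_antisymm
  · rintro _ ⟨t, rfl⟩
    induction t using TensorProduct.induction_on with
    | zero => simp
    | add x y hx hy => rw [map_add]; exact Submodule.add_mem _ hx hy
    | tmul c e =>
      rw [smulPair_tmul]
      obtain ⟨c, hc⟩ := c
      dsimp only
      induction hc using Submodule.span_induction with
      | mem c hc => exact Submodule.subset_span ⟨c, hc, e, e.2, rfl⟩
      | zero => simp
      | add x y _ _ hx hy => rw [add_smul]; exact Submodule.add_mem _ hx hy
      | smul r x _ hx => rw [Algebra.smul_def, mul_smul, algebraMap_smul]; exact Submodule.smul_mem _ _ hx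
  · rw [Submodule.span_le]
    rintro _ ⟨c, hc, e, he, rfl⟩
    exact ⟨(⟨c, Submodule.subset_span hc⟩ : Submodule.span ℚ S) ⊗ₜ ⟨e, he⟩, rfl⟩

lemma smulPair_inj (W : Submodule ℚ KK) (E : Submodule ℚ V)
    (h : Function.Injective (smulAll E)) : Function.Injective (smulPair W E) := by
  have : smulPair W E = smulAll E ∘ₗ LinearMap.rTensor E W.subtype := by
    ext c e; rfl
  rw [this, LinearMap.coe_comp]
  exact h.comp (Module.Flat.rTensor_preserves_injective_linearMap _ W.injective_subtype)

lemma smulAll_smul (E : Submodule ℚ V) (c : KK) (t : KK ⊗[ℚ] E) :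
    smulAll E (c • t) = c • smulAll E t := by
  induction t using TensorProduct.induction_on with
  | zero => simp
  | add x y hx hy => rw [smul_add, map_add, map_add, smul_add, hx, hy]
  | tmul d e => rw [TensorProduct.smul_tmul', smulAll_tmul, smulAll_tmul, smul_eq_mul, mul_smul]

/-- polynomials of degree `< n` with coefficients in `E`. -/
def PP (p : KK) (E : Submodule ℚ V) : ℕ → KK ⊗[ℚ] E → Prop
  | 0, t => t = 0
  | n + 1, t => ∃ (e : E) (s : KK ⊗[ℚ] E), PP p E n s ∧ t = (1 : KK) ⊗ₜ e + p • s

lemma PP_zero (p : KK) (E : Submodule ℚ V) (n : ℕ) : PP p E n 0 := by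
  induction n with
  | zero => rfl
  | succ n ih => exact ⟨0, 0, ih, by simp⟩

lemma PP_succ (p : KK) (E : Submodule ℚ V) (n : ℕ) : ∀ t, PP p E n t → PP p E (n + 1) t := by
  induction n with
  | zero => rintro t rfl; exact PP_zero p E 1
  | succ n ih =>
    rintro t ⟨e, s, hs, rfl⟩
    exact ⟨e, s, ih s hs, rfl⟩

lemma PP_mono (p : KK) (E : Submodule ℚ V) (n m : ℕ) (t) (h : PP p E n t) :
    PP p E (n + m) t := by
  induction m with
  | zero => exact h
  | succ m ih => exact PP_succ p E _ _ ih

lemma PP_add (p : KK) (E : Submodule ℚ V) (n : ℕ) :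
    ∀ t u, PP p E n t → PP p E n u → PP p E n (t + u) := by
  induction n with
  | zero => rintro t u rfl rfl; exact add_zero _
  | succ n ih =>
    rintro _ _ ⟨e, s, hs, rfl⟩ ⟨e', s', hs', rfl⟩
    exact ⟨e + e', s + s', ih _ _ hs hs', by rw [TensorProduct.tmul_add, smul_add]; abel⟩

lemma PP_smul (p : KK) (E : Submodule ℚ V) (r : ℚ) (n : ℕ) :
    ∀ t, PP p E n t → PP p E n (r • t) := by
  induction n with
  | zero => rintro t rfl; exact smul_zero _
  | succ n ih =>
    rintro _ ⟨e, s, hs, rfl⟩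
    exact ⟨r • e, r • s, ih _ hs, by rw [TensorProduct.tmul_smul, smul_add, smul_comm r p s]⟩

/-- all polynomials with coefficients in `E`. -/
def PS (p : KK) (E : Submodule ℚ V) : Submodule ℚ (KK ⊗[ℚ] E) where
  carrier := {t | ∃ n, PP p E n t}
  zero_mem' := ⟨0, rfl⟩
  add_mem' := by
    rintro a b ⟨n, hn⟩ ⟨m, hm⟩
    refine ⟨n + m, PP_add _ _ _ _ _ (PP_mono _ _ _ _ _ hn) ?_⟩
    rw [add_comm]; exact PP_mono _ _ _ _ _ hm
  smul_mem' := by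
    rintro r a ⟨n, hn⟩
    exact ⟨n, PP_smul _ _ _ _ _ hn⟩

lemma PS_p (p : KK) (E : Submodule ℚ V) : ∀ x ∈ PS p E, p • x ∈ PS p E := by
  rintro x ⟨n, hn⟩
  exact ⟨n + 1, 0, x, hn, by simp⟩

lemma PS_den {p : KK} (hp : Good p) (E : Submodule ℚ V) (t : KK ⊗[ℚ] E) :
    ∃ g : Polynomial ℚ, g ≠ 0 ∧ Polynomial.aeval p g • t ∈ PS p E := by
  have hst := aeval_stable p (PS p E) (PS_p p E)
  induction t using TensorProduct.induction_on with
  | zero => exact ⟨1, by simp, by simp⟩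
  | add x y hx hy =>
    obtain ⟨n, hn0, hn⟩ := hx
    obtain ⟨m, hm0, hm⟩ := hy
    refine ⟨n * m, mul_ne_zero hn0 hm0, ?_⟩
    rw [smul_add]
    apply Submodule.add_mem
    · rw [mul_comm, map_mul, mul_smul]; exact hst _ _ hn
    · rw [map_mul, mul_smul]; exact hst _ _ hm
  | tmul c e =>
    obtain ⟨f, g, hg, rfl⟩ := hp.2.2 c
    have h0 : Polynomial.aeval p g ≠ 0 := fun h => hg (hp.2.1 _ h)
    refine ⟨g, hg, ?_⟩
    have : (1 : KK) ⊗ₜ[ℚ] e ∈ PS p E := ⟨1, e, 0, rfl, by simp⟩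
    have := hst f _ this
    rw [TensorProduct.smul_tmul', smul_eq_mul, mul_one] at this
    rwa [TensorProduct.smul_tmul', smul_eq_mul, mul_div_cancel₀ _ h0]

section inj
variable {p : KK} (hp : Good p) {L E : Submodule ℚ V} (hEL : E ≤ L)
  (hL : IsSubmoduleOver (Ap p) L)

include hEL hL in
lemma PP_mem (n : ℕ) : ∀ t, PP p E n t → smulAll E t ∈ L := by
  induction n with
  | zero => rintro t rfl; simp
  | succ n ih =>
    rintro _ ⟨e, s, hs, rfl⟩
    rw [map_add, smulAll_tmul, one_smul, smulAll_smul]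
    exact L.add_mem (hEL e.2) (hL p (Ap_p p) _ (ih s hs))

include hp hEL hL in
lemma PP_ker (h : C1 p L E) (n : ℕ) : ∀ t, PP p E n t → smulAll E t = 0 → t = 0 := by
  induction n with
  | zero => intro t ht _; exact ht
  | succ n ih =>
    rintro _ ⟨e, s, hs, rfl⟩ h0
    rw [map_add, smulAll_tmul, one_smul, smulAll_smul] at h0
    have h1 : p • smulAll E s = -(e : V) := by
      rw [eq_neg_iff_add_eq_zero, add_comm]; exact h0
    have hs0 := h.1 _ (PP_mem hEL hL n s hs) (by rw [h1]; exact E.neg_mem e.2)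
    rw [hs0, smul_zero] at h1
    have he : e = 0 := Subtype.ext (neg_eq_zero.1 h1.symm)
    rw [ih s hs hs0, he]; simp

include hp hEL hL in
lemma smulAll_inj (h : C1 p L E) : Function.Injective (smulAll E) := by
  rw [injective_iff_map_eq_zero]
  intro t ht
  obtain ⟨g, hg, n, hn⟩ := PS_den hp E t
  have := PP_ker hp hEL hL h n _ hn (by rw [smulAll_smul, ht, smul_zero])
  exact (smul_eq_zero.1 this).resolve_left (fun h => hg (hp.2.1 _ h))

/-- the span of `Ap E` -/
def MM (p : KK) (E : Submodule ℚ V) : Submodule ℚ V :=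
  Submodule.span ℚ {x | ∃ c ∈ Ap p, ∃ e ∈ E, x = c • e}

lemma MM_stable (p : KK) (E : Submodule ℚ V) : IsSubmoduleOver (Ap p) (MM p E) := by
  intro c hc x hx
  induction hx using Submodule.span_induction with
  | mem x hx =>
    obtain ⟨d, hd, e, he, rfl⟩ := hx
    exact Submodule.subset_span ⟨c * d, Ap_mul hc hd, e, he, by rw [mul_smul]⟩
  | zero => simp
  | add x y _ _ hx hy => rw [smul_add]; exact Submodule.add_mem _ hx hy
  | smul r x _ hx => rw [smul_comm]; exact Submodule.smul_mem _ _ hx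

lemma E_le_MM (p : KK) (E : Submodule ℚ V) : E ≤ MM p E := fun x hx =>
  Submodule.subset_span ⟨1, Ap_one p, x, hx, by simp⟩

include hEL hL in
lemma MM_le : MM p E ≤ L := by
  rw [MM, Submodule.span_le]
  rintro _ ⟨c, hc, e, he, rfl⟩
  exact hL c hc e (hEL he)

include hp in
lemma MM_decomp (x : V) (hx : x ∈ MM p E) : ∃ e ∈ E, ∃ y ∈ MM p E, x = e + p • y := by
  induction hx using Submodule.span_induction with
  | mem x hx =>
    obtain ⟨c, hc, e, he, rfl⟩ := hx
    obtain ⟨r, d, hd, rfl⟩ := Ap_decomp hp hc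
    exact ⟨r • e, E.smul_mem r he, d • e, Submodule.subset_span ⟨d, hd, e, he, rfl⟩,
      by rw [add_smul, mul_smul, algebraMap_smul]⟩
  | zero => exact ⟨0, E.zero_mem, 0, Submodule.zero_mem _, by simp⟩
  | add x y _ _ hx hy =>
    obtain ⟨a, ha, b, hb, rfl⟩ := hx
    obtain ⟨c, hc, d, hd, rfl⟩ := hy
    exact ⟨a + c, E.add_mem ha hc, b + d, Submodule.add_mem _ hb hd, by rw [smul_add]; abel⟩
  | smul r x _ hx =>
    obtain ⟨a, ha, b, hb, rfl⟩ := hx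
    exact ⟨r • a, E.smul_mem r ha, r • b, Submodule.smul_mem _ r hb,
      by rw [smul_add, smul_comm r]⟩

include hp hEL hL in
lemma MM_eq (h : C1 p L E) (hE : Submodule.span KK (E : Set V) = ⊤) : MM p E = L := by
  apply le_antisymm (MM_le hEL hL)
  have hM : Submodule.span KK (MM p E : Set V) = ⊤ := by
    rw [eq_top_iff, ← hE]; exact Submodule.span_mono (E_le_MM p E)
  intro x hx
  obtain ⟨n, hn⟩ := exists_pow hp (MM_stable p E) hM x
  induction n generalizing x with
  | zero => simpa using hn
  | succ n ih =>
    apply ih hx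
    have hy := ppow_mem (fun x hx => hL p (Ap_p p) x hx) n x hx
    obtain ⟨e, he, m, hm, hem⟩ := MM_decomp hp _ hn
    have h1 : p • (p ^ n • x - m) = e := by
      rw [smul_sub, ← mul_smul, ← pow_succ', hem]; abel
    have := h.1 _ (L.sub_mem hy (MM_le hEL hL hm)) (by rw [h1]; exact he)
    rw [sub_eq_zero.1 this]; exact hm

include hp in
lemma C1_of (hb : Function.Bijective (smulAll E)) : C1 p (MM p E) E := by
  refine ⟨?_, fun x hx => MM_decomp hp x hx⟩
  intro y hy hyE
  by_contra hne
  have hpy : (⟨p • y, hyE⟩ : E) ≠ 0 := by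
    intro h
    exact hne ((smul_eq_zero.1 (congrArg Subtype.val h)).resolve_left hp.1)
  obtain ⟨φ, hφ⟩ : ∃ φ : Module.Dual ℚ E, φ ⟨p • y, hyE⟩ ≠ 0 := by
    by_contra hcon
    push Not at hcon
    exact hpy ((Module.forall_dual_apply_eq_zero_iff ℚ _).1 hcon)
  let Θ := LinearEquiv.ofBijective (smulAll E) hb
  let Φ : V →ₗ[ℚ] KK := (TensorProduct.rid ℚ KK).toLinearMap ∘ₗ LinearMap.lTensor KK φ ∘ₗ
    Θ.symm.toLinearMap
  have hΦ : ∀ (c : KK) (e : E), Φ (c • (e : V)) = algebraMap ℚ KK (φ e) * c := by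
    intro c e
    have : Θ.symm (c • (e : V)) = c ⊗ₜ e := by
      rw [LinearEquiv.symm_apply_eq]; rfl
    simp only [Φ, LinearMap.comp_apply, LinearEquiv.coe_coe, this, LinearMap.lTensor_tmul,
      TensorProduct.rid_tmul, Algebra.smul_def]
  have hcl : ∃ a ∈ Ap p, Φ (p • y) = p * a := by
    clear hφ hpy hne hyE
    induction hy using Submodule.span_induction with
    | mem x hx =>
      obtain ⟨c, hc, e, he, rfl⟩ := hx
      refine ⟨algebraMap ℚ KK (φ ⟨e, he⟩) * c, ?_, ?_⟩
      · refine Ap_mul ?_ hc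
        simpa using Ap_aeval p (Polynomial.C (φ ⟨e, he⟩))
      · rw [← mul_smul, hΦ (p * c) ⟨e, he⟩]; ring
    | zero => exact ⟨0, by simpa using Ap_aeval p 0, by simp⟩
    | add x y _ _ hx hy =>
      obtain ⟨a, ha, h1⟩ := hx
      obtain ⟨b, hb, h2⟩ := hy
      exact ⟨a + b, Ap_add hp ha hb, by rw [smul_add, map_add, h1, h2, mul_add]⟩
    | smul r x _ hx =>
      obtain ⟨a, ha, h1⟩ := hx
      refine ⟨algebraMap ℚ KK r * a, ?_, ?_⟩
      · refine Ap_mul ?_ ha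
        simpa using Ap_aeval p (Polynomial.C r)
      · rw [smul_comm, LinearMap.map_smul, h1, Algebra.smul_def]; ring
  obtain ⟨a, ha, h1⟩ := hcl
  have h2 := hΦ 1 ⟨p • y, hyE⟩
  rw [one_smul] at h2
  dsimp only at h2
  rw [h1] at h2
  set r := φ ⟨p • y, hyE⟩ with hr
  have ha' : algebraMap ℚ KK r⁻¹ * a ∈ Ap p := by
    refine Ap_mul ?_ ha
    simpa using Ap_aeval p (Polynomial.C r⁻¹)
  apply Ap_contra hp ha'
  have h3 : p * (algebraMap ℚ KK r⁻¹ * a) = algebraMap ℚ KK r⁻¹ * (p * a) := by ring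
  rw [h3, h2, mul_one, ← map_mul, inv_mul_cancel₀ hφ, map_one]

end inj

lemma Aset_qq : qq ∈ Aset := ⟨Polynomial.X, 0, by simp [qq]⟩
lemma Aset_inv : qq⁻¹ ∈ Aset := ⟨1, 1, by simp⟩
lemma Aset_zpow (k : ℤ) : qq ^ k ∈ Aset := by
  rcases lt_or_ge k 0 with hk | hk
  · exact ⟨1, k.natAbs, by rw [map_one, one_mul]; congr 1; omega⟩
  · obtain ⟨n, rfl⟩ : ∃ n : ℕ, k = n := ⟨k.toNat, by omega⟩
    exact ⟨Polynomial.X ^ n, 0, by simp [qq]⟩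

theorem stmt5 (L0 Li VA : Submodule ℚ V)
    (h0 : IsSubmoduleOver A0set L0) (hi : IsSubmoduleOver AinfSet Li)
    (hA : IsSubmoduleOver Aset VA)
    (hg0 : Submodule.span KK (L0 : Set V) = ⊤)
    (hgi : Submodule.span KK (Li : Set V) = ⊤)
    (hgA : Submodule.span KK (VA : Set V) = ⊤) :
    (Function.Bijective
        (balMap L0 (L0 ⊓ Li ⊓ VA) (le_trans inf_le_left inf_le_left)
          ((scalMul qq L0).comap L0.subtype))
      ↔ Function.Bijective
        (balMap Li (L0 ⊓ Li ⊓ VA) (le_trans inf_le_left inf_le_right)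
          ((scalMul qq⁻¹ Li).comap Li.subtype))) ∧
    (Function.Bijective
        (balMap L0 (L0 ⊓ Li ⊓ VA) (le_trans inf_le_left inf_le_left)
          ((scalMul qq L0).comap L0.subtype))
      ↔ ((L0 ⊓ VA) ⊔ (scalMul qq⁻¹ Li ⊓ VA) = VA ∧ (L0 ⊓ VA) ⊓ (scalMul qq⁻¹ Li ⊓ VA) = ⊥)) ∧
    (Function.Bijective
        (balMap L0 (L0 ⊓ Li ⊓ VA) (le_trans inf_le_left inf_le_left)
          ((scalMul qq L0).comap L0.subtype))
      ↔ (Function.Injective (smulPair (Submodule.span ℚ A0set) (L0 ⊓ Li ⊓ VA)) ∧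
          LinearMap.range (smulPair (Submodule.span ℚ A0set) (L0 ⊓ Li ⊓ VA)) = L0 ∧
          Function.Injective (smulPair (Submodule.span ℚ AinfSet) (L0 ⊓ Li ⊓ VA)) ∧
          LinearMap.range (smulPair (Submodule.span ℚ AinfSet) (L0 ⊓ Li ⊓ VA)) = Li ∧
          Function.Injective (smulPair (Submodule.span ℚ Aset) (L0 ⊓ Li ⊓ VA)) ∧
          LinearMap.range (smulPair (Submodule.span ℚ Aset) (L0 ⊓ Li ⊓ VA)) = VA ∧
          Function.Bijective (smulAll (L0 ⊓ Li ⊓ VA)))) := by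
  have hA1 : ∀ x ∈ VA, qq • x ∈ VA := fun x hx => hA _ Aset_qq x hx
  have hA2 : ∀ x ∈ VA, qq⁻¹ • x ∈ VA := fun x hx => hA _ Aset_inv x hx
  have hA3 : ∀ x ∈ VA, qq⁻¹⁻¹ • x ∈ VA := by rwa [inv_inv]
  have hg := good_qq
  have hg' := good_inv
  have hg'' : Good qq⁻¹⁻¹ := by rwa [inv_inv]
  rw [C1_iff _ hg.1, C1_iff _ hg'.1, C3_iff _ hg.1 _ _ _ hA1 hA2]
  rw [A0set_eq] at h0 ⊢
  rw [AinfSet_eq] at hi ⊢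
  have h0' : IsSubmoduleOver (Ap qq⁻¹⁻¹) L0 := by rwa [inv_inv]
  set E := L0 ⊓ Li ⊓ VA with hEdef
  have hE0 : E ≤ L0 := le_trans inf_le_left inf_le_left
  have hEi : E ≤ Li := le_trans inf_le_left inf_le_right
  have hEA : E ≤ VA := inf_le_right
  have hE : ∀ x, x ∈ E ↔ x ∈ L0 ∧ x ∈ Li ∧ x ∈ VA := by
    intro x; rw [hEdef, Submodule.mem_inf, Submodule.mem_inf, and_assoc]
  have hE' : ∀ x, x ∈ E ↔ x ∈ Li ∧ x ∈ L0 ∧ x ∈ VA := by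
    intro x; rw [hE]; tauto
  have e13 : C1 qq L0 E ↔ C3 qq L0 Li VA :=
    ⟨C1_C3 hg hg' hE h0 hi hA1 hA2 hg0 hgi, C3_C1 hg hE h0 hA1 hA2 hgA⟩
  have e23 : C1 qq⁻¹ Li E ↔ C3 qq⁻¹ Li L0 VA :=
    ⟨C1_C3 hg' hg'' hE' hi h0' hA2 hA3 hgi hg0, C3_C1 hg' hE' hi hA2 hA3 hgA⟩
  have e33 : C3 qq L0 Li VA ↔ C3 qq⁻¹ Li L0 VA := by
    refine ⟨C3_symm _ hg.1 _ _ _ hA1 hA2, fun h => ?_⟩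
    have := C3_symm _ hg'.1 _ _ _ hA2 hA3 h
    rwa [inv_inv] at this
  have e12 : C1 qq L0 E ↔ C1 qq⁻¹ Li E := by rw [e13, e33, e23]
  refine ⟨e12, e13, ?_⟩
  rw [range_smulPair, range_smulPair, range_smulPair]
  constructor
  · intro h1
    have h2 := e12.1 h1
    have hinj := smulAll_inj hg hE0 h0 h1
    have hT := VA_le hg hg' hE h0 hi hA1 hA2 hg0 hgi h1
    have hTE : (TT qq E : Set V) ⊆ Submodule.span KK (E : Set V) := by
      intro x hx
      have hx : x ∈ TT qq E := hx
      have hle : TT qq E ≤ (Submodule.span KK (E : Set V)).restrictScalars ℚ := by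
        rw [TT, Submodule.span_le]
        rintro _ ⟨k, e, he, rfl⟩
        exact Submodule.smul_mem (Submodule.span KK (E : Set V)) _ (Submodule.subset_span he)
      exact hle hx
    have hEtop : Submodule.span KK (E : Set V) = ⊤ := by
      rw [eq_top_iff, ← hgA, Submodule.span_le]
      exact fun x hx => hTE (hT hx)
    refine ⟨smulPair_inj _ _ hinj, MM_eq hg hE0 h0 h1 hEtop, smulPair_inj _ _ hinj,
      MM_eq hg' hEi hi h2 hEtop, smulPair_inj _ _ hinj, ?_, hinj, ?_⟩
    · apply le_antisymm
      · rw [Submodule.span_le]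
        rintro _ ⟨c, hc, e, he, rfl⟩
        exact hA c hc e (hEA he)
      · refine hT.trans ?_
        rw [TT, Submodule.span_le]
        rintro _ ⟨k, e, he, rfl⟩
        exact Submodule.subset_span ⟨_, Aset_zpow k, e, he, rfl⟩
    · intro v
      have hv : v ∈ Submodule.span KK (E : Set V) := hEtop ▸ Submodule.mem_top
      induction hv using Submodule.span_induction with
      | mem x hx => exact ⟨(1 : KK) ⊗ₜ ⟨x, hx⟩, by rw [smulAll_tmul, one_smul]⟩
      | zero => exact ⟨0, map_zero _⟩
      | add x y _ _ hx hy =>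
        obtain ⟨a, rfl⟩ := hx
        obtain ⟨b, rfl⟩ := hy
        exact ⟨a + b, map_add _ _ _⟩
      | smul c x _ hx =>
        obtain ⟨a, rfl⟩ := hx
        exact ⟨c • a, smulAll_smul _ _ _⟩
  · rintro ⟨_, hr, _, _, _, _, hb⟩
    have := C1_of hg hb
    rwa [MM, hr] at this
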